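/- (Theorem A, semi-local linearization in the affine space) Let φ be a holomorphic ℂ*-action on ℂⁿ having p ∈ ℂⁿ as a fixed point, and let ψ be the linearized action of φ at p. Then there is an entire holomorphic map F : ℂⁿ → ℂⁿ with F(p) = 0 such that ψ^z ∘ F = F ∘ φ^z for every z ∈ ℂ*. Moreover, there is a φ-invariant open set W ∋ p in ℂⁿ such that F restricted to W is a biholomorphism onto the open set F(W). -/

import Mathlib

/-!
In the time `a`, where `z = exp (a * I)`, the action becomes a holomorphic flow `Φ` of real period
`2π` fixing `p`, and `ψ` becomes the one-parameter group `A a = D(Φ a)(p)`. The mean of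
`A (-θ) (Φ θ x - p)` over a period defines an entire map `F` with `F p = 0` and `DF(p) = id`, which
intertwines `Φ` with `A` at real times, hence at all complex times by the identity theorem.

`F` has a holomorphic local inverse near `p`, and `W` is the saturation under `Φ` of a small
neighbourhood `N` of `p`. For injectivity on `W`, let `F x₁ = F x₂ = y` with `Φ a x₁` and `Φ b x₂`
in `N`. Then `A a y` and `A b y` are close to `0`. As `A` is bounded at real times, the
Phragmén–Lindelöf principle confines `A ζ y` to the domain of the local inverse for all `ζ` in the
horizontal strip between `a` and `b`. Over that strip the local inverse of `A ζ y` is holomorphic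
and equals `Φ ζ x₁` near `ζ = a`, hence everywhere; at `ζ = b` it equals `Φ b x₂`. So
`Φ b x₁ = Φ b x₂`, and `x₁ = x₂`.
-/

open Set Filter Topology Metric Complex MeasureTheory

section Holomorphic

variable {E G : Type*} [NormedAddCommGroup E] [NormedSpace ℂ E]
  [NormedAddCommGroup G] [NormedSpace ℂ G] {f : E → G} {x : E}

theorem norm_fderiv_le_two_mul_div_of_forall_norm_le {R C : ℝ} (hR : 0 < R)
    (hf : DifferentiableOn ℂ f (ball x R)) (hC : ∀ y ∈ ball x R, ‖f y‖ ≤ C) :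
    ‖fderiv ℂ f x‖ ≤ 2 * C / R := by
  refine norm_fderiv_le_div_of_mapsTo_ball hf (fun y hy => mem_closedBall_iff_norm.2 ?_) hR
  linarith [norm_sub_le (f y) (f x), hC y hy, hC x (mem_ball_self hR)]

theorem exists_lipschitzOnWith_ball_of_eventually_differentiableAt
    (hf : ∀ᶠ y in 𝓝 x, DifferentiableAt ℂ f y) :
    ∃ K, ∃ R > 0, LipschitzOnWith K f (ball x R) ∧ ∀ y ∈ ball x R, DifferentiableAt ℂ f y := by
  have hbdd : ∀ᶠ y in 𝓝 x, ‖f y‖ < ‖f x‖ + 1 :=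
    hf.self_of_nhds.continuousAt.norm.eventually_lt_const (lt_add_one _)
  obtain ⟨R, hR, hball⟩ := Metric.eventually_nhds_iff_ball.1 (hf.and hbdd)
  have hsub : ball x (R / 2) ⊆ ball x R := ball_subset_ball (half_le_self hR.le)
  refine ⟨(2 * (‖f x‖ + 1) / (R / 2)).toNNReal, R / 2, half_pos hR, ?_,
    fun y hy => (hball y (hsub hy)).1⟩
  refine (convex_ball x (R / 2)).lipschitzOnWith_of_nnnorm_fderiv_le
    (fun y hy => (hball y (hsub hy)).1) fun y hy => NNReal.le_toNNReal_of_coe_le ?_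
  have hsub' : ball y (R / 2) ⊆ ball x R :=
    ball_subset_ball' (by linarith [mem_ball.1 hy])
  exact norm_fderiv_le_two_mul_div_of_forall_norm_le (half_pos hR)
    (fun z hz => (hball z (hsub' hz)).1.differentiableWithinAt)
    (fun z hz => (hball z (hsub' hz)).2.le)

-- The Cauchy estimate is applied to the increment `z ↦ f (z + h) - f z`, which is `O(h)`.
theorem continuousAt_fderiv_of_eventually_differentiableAt
    (hf : ∀ᶠ y in 𝓝 x, DifferentiableAt ℂ f y) : ContinuousAt (fderiv ℂ f) x := by
  obtain ⟨K, R, hR, hK, hd⟩ := exists_lipschitzOnWith_ball_of_eventually_differentiableAt hf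
  have hbound : ∀ᶠ y in 𝓝 x,
      ‖fderiv ℂ f y - fderiv ℂ f x‖ ≤ 2 * (K * ‖y - x‖) / (R / 2) := by
    filter_upwards [ball_mem_nhds x (half_pos hR)] with y hy
    have hmem : ∀ z ∈ ball x (R / 2), z ∈ ball x R ∧ z + (y - x) ∈ ball x R := by
      intro z hz
      rw [mem_ball_iff_norm] at hy hz
      refine ⟨mem_ball_iff_norm.2 (by linarith), mem_ball_iff_norm.2 ?_⟩
      calc ‖z + (y - x) - x‖ ≤ ‖z - x‖ + ‖y - x‖ := by
            rw [add_sub_right_comm]; exact norm_add_le _ _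
        _ < R := by linarith
    have hshift : ∀ z ∈ ball x (R / 2), DifferentiableAt ℂ (fun z => f (z + (y - x))) z :=
      fun z hz => (differentiableAt_comp_add_right _).2 (hd _ (hmem z hz).2)
    have hx : x ∈ ball x (R / 2) := mem_ball_self (half_pos hR)
    have hfd : fderiv ℂ (fun z => f (z + (y - x)) - f z) x = fderiv ℂ f y - fderiv ℂ f x := by
      rw [fderiv_fun_sub (hshift x hx) (hd x (hmem x hx).1), fderiv_comp_add_right,
        add_sub_cancel]
    rw [← hfd]
    refine norm_fderiv_le_two_mul_div_of_forall_norm_le (half_pos hR)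
      (fun z hz => ((hshift z hz).sub (hd z (hmem z hz).1)).differentiableWithinAt) fun z hz => ?_
    simpa using hK.norm_sub_le (hmem z hz).2 (hmem z hz).1
  rw [ContinuousAt, tendsto_iff_norm_sub_tendsto_zero]
  refine squeeze_zero' (Eventually.of_forall fun _ => norm_nonneg _) hbound ?_
  exact Continuous.tendsto' (by fun_prop) _ _ (by simp)

theorem continuous_fderiv_of_differentiable (hf : Differentiable ℂ f) :
    Continuous (fderiv ℂ f) :=
  continuous_iff_continuousAt.2 fun _ =>
    continuousAt_fderiv_of_eventually_differentiableAt (Eventually.of_forall hf)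

end Holomorphic

theorem hasFDerivAt_intervalIntegral_of_continuous {𝕜 E G : Type*} [RCLike 𝕜]
    [NormedAddCommGroup E] [NormedSpace 𝕜 E]
    [NormedAddCommGroup G] [NormedSpace ℝ G] [NormedSpace 𝕜 G]
    {F : E → ℝ → G} {F' : E → ℝ → E →L[𝕜] G} (hF : ∀ x, Continuous (F x))
    (hF' : Continuous fun q : E × ℝ => F' q.1 q.2)
    (hderiv : ∀ x t, HasFDerivAt (fun x => F x t) (F' x t) x) (a b : ℝ) (x₀ : E) :
    HasFDerivAt (fun x => ∫ t in a..b, F x t) (∫ t in a..b, F' x₀ t) x₀ := by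
  have hF'x : Continuous (F' x₀) := hF'.comp (.prodMk_right x₀)
  obtain ⟨C, hC⟩ := isCompact_uIcc.exists_bound_of_continuousOn (hF'x.continuousOn (s := uIcc a b))
  have hbound : ∀ᶠ x in 𝓝 x₀, ∀ t ∈ uIcc a b, ‖F' x t‖ < C + 1 :=
    isCompact_uIcc.eventually_forall_of_forall_eventually fun t ht =>
      hF'.norm.continuousAt.eventually_lt_const ((hC t ht).trans_lt (lt_add_one C))
  exact intervalIntegral.hasFDerivAt_integral_of_dominated_of_fderiv_le
    (bound := fun _ => C + 1) hbound
    (Eventually.of_forall fun x => (hF x).aestronglyMeasurable)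
    ((hF x₀).intervalIntegrable a b) hF'x.aestronglyMeasurable
    (Eventually.of_forall fun t ht x hx => (hx t (uIoc_subset_uIcc ht)).le)
    intervalIntegrable_const (Eventually.of_forall fun t _ x _ => hderiv x t)

section CauchyFormula

variable {E G : Type*} [NormedAddCommGroup E] [NormedSpace ℂ E]
  [NormedAddCommGroup G] [NormedSpace ℂ G] [CompleteSpace G] {f : E → G}

theorem fderiv_apply_eq_circleIntegral (hf : Differentiable ℂ f) (x v : E) :
    fderiv ℂ f x v = (2 * Real.pi * I : ℂ)⁻¹ • ∮ w in C(0, 1), (w ^ 2)⁻¹ • f (x + w • v) := by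
  have hline : HasDerivAt (fun w : ℂ => f (x + w • v)) (fderiv ℂ f x v) 0 :=
    (hf x).hasFDerivAt.hasLineDerivAt v
  have hcauchy := two_pi_I_inv_smul_circleIntegral_sub_sq_inv_smul_of_differentiable
    isOpen_univ (subset_univ (closedBall (0 : ℂ) 1))
    (hf.comp (by fun_prop : Differentiable ℂ fun w : ℂ => x + w • v)).differentiableOn
    (mem_ball_self one_pos)
  rw [← hline.deriv]
  simpa [Function.comp_def] using hcauchy.symm

theorem differentiable_fderiv_apply (hf : Differentiable ℂ f) (v : E) :
    Differentiable ℂ fun x => fderiv ℂ f x v := by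
  simp_rw [fderiv_apply_eq_circleIntegral hf]
  refine Differentiable.const_smul (fun x => ?_) _
  have hcircle : Continuous (circleMap 0 1) := continuous_circleMap 0 1
  have hweight : Continuous fun t => (circleMap 0 1 t ^ 2)⁻¹ :=
    (hcircle.pow 2).inv₀ fun t => pow_ne_zero 2 (circleMap_ne_center one_ne_zero)
  have hweight' : Continuous fun q : E × ℝ => (circleMap 0 1 q.2 ^ 2)⁻¹ := hweight.snd'
  have hfc := hf.continuous
  have hfc' := continuous_fderiv_of_differentiable hf
  refine (hasFDerivAt_intervalIntegral_of_continuous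
    (F' := fun x t => deriv (circleMap 0 1) t •
      (circleMap 0 1 t ^ 2)⁻¹ • fderiv ℂ f (x + circleMap 0 1 t • v))
    (fun x => ?_) ?_ (fun x t => ?_) 0 (2 * Real.pi) x).differentiableAt
  · simp only [deriv_circleMap]
    fun_prop
  · simp only [deriv_circleMap]
    fun_prop
  · exact (((hasFDerivAt_comp_add_right _).2 (hf _).hasFDerivAt).const_smul _).const_smul _

end CauchyFormula

theorem eq_of_forall_ofReal_eq {G : Type*} [NormedAddCommGroup G] [NormedSpace ℂ G]
    [CompleteSpace G] {f g : ℂ → G} (hf : Differentiable ℂ f) (hg : Differentiable ℂ g)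
    (h : ∀ t : ℝ, f t = g t) : f = g := by
  have htend : Tendsto ((↑) : ℝ → ℂ) (𝓝[≠] 0) (𝓝[≠] 0) :=
    continuous_ofReal.continuousWithinAt.tendsto_nhdsWithin fun t ht => ofReal_ne_zero.2 ht
  exact AnalyticOnNhd.eq_of_frequently_eq (fun z _ => hf.analyticAt z)
    (fun z _ => hg.analyticAt z) (htend.frequently (Frequently.of_forall h))

/-- A strongly holomorphic one-parameter group of bounded operators, indexed by complex time. -/
structure IsHolomorphicOneParamGroup {E : Type*} [NormedAddCommGroup E] [NormedSpace ℂ E]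
    (A : ℂ → E →L[ℂ] E) : Prop where
  differentiable_apply (y : E) : Differentiable ℂ fun a => A a y
  map_zero : A 0 = .id ℂ E
  map_add (a b : ℂ) : A (a + b) = A a ∘L A b

namespace IsHolomorphicOneParamGroup

variable {E : Type*} [NormedAddCommGroup E] [NormedSpace ℂ E] {A : ℂ → E →L[ℂ] E}

theorem map_neg_map (hA : IsHolomorphicOneParamGroup A) (a : ℂ) (y : E) : A (-a) (A a y) = y := by
  rw [← ContinuousLinearMap.comp_apply, ← hA.map_add, neg_add_cancel, hA.map_zero,
    ContinuousLinearMap.id_apply]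

variable {M : ℝ}

theorem norm_apply_le_of_im_eq (hA : IsHolomorphicOneParamGroup A) (hM : ∀ θ : ℝ, ‖A θ‖ ≤ M)
    (y : E) {z w : ℂ} (h : z.im = w.im) : ‖A z y‖ ≤ M * ‖A w y‖ := by
  have hzw : z = ((z.re - w.re : ℝ) : ℂ) + w := by apply Complex.ext <;> simp [h]
  rw [hzw, hA.map_add]
  exact (A _).le_of_opNorm_le (hM _) _

-- The bound `hM` on real times makes `A ζ y` bounded on horizontal strips, so that the
-- Phragmén–Lindelöf principle applies.
theorem norm_apply_le_of_im_mem_uIcc (hA : IsHolomorphicOneParamGroup A)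
    (hM : ∀ θ : ℝ, ‖A θ‖ ≤ M) {y : E} {σ τ ζ : ℂ} {δ : ℝ} (hσ : ‖A σ y‖ ≤ δ) (hτ : ‖A τ y‖ ≤ δ)
    (hζ : ζ.im ∈ uIcc σ.im τ.im) : ‖A ζ y‖ ≤ M * δ := by
  wlog hle : σ.im ≤ τ.im generalizing σ τ
  · exact this hτ hσ (uIcc_comm σ.im τ.im ▸ hζ) (le_of_not_ge hle)
  rw [uIcc_of_le hle] at hζ
  have hM0 : 0 ≤ M := (norm_nonneg _).trans (hM 0)
  have hedge {w : ℂ} (hw : ‖A w y‖ ≤ δ) (z : ℂ) (hz : z.im = w.im) : ‖A z y‖ ≤ M * δ :=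
    (hA.norm_apply_le_of_im_eq hM y hz).trans (by gcongr)
  obtain heq | hlt := hle.eq_or_lt
  · exact hedge hσ ζ (le_antisymm (heq ▸ hζ.2) hζ.1)
  have hAy : Differentiable ℂ fun z => A z y := hA.differentiable_apply y
  have hvert : Continuous fun s : ℝ => A (s * I) y := hAy.continuous.comp (by fun_prop)
  obtain ⟨C, hC⟩ := isCompact_Icc.exists_bound_of_continuousOn
    (hvert.continuousOn (s := Icc σ.im τ.im))
  have hstrip : ∀ z ∈ im ⁻¹' Ioo σ.im τ.im, ‖A z y‖ ≤ M * C := fun z hz =>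
    (hA.norm_apply_le_of_im_eq hM y (w := z.im * I) (by simp)).trans
      (by gcongr; exact hC z.im (Ioo_subset_Icc_self hz))
  refine PhragmenLindelof.horizontal_strip (f := fun z => A z y) hAy.diffContOnCl
    ⟨0, div_pos Real.pi_pos (sub_pos.2 hlt), 0, ?_⟩ (hedge hσ) (hedge hτ) hζ.1 hζ.2
  refine .of_bound (M * C) (mem_inf_of_right fun z hz => ?_)
  simpa using hstrip z hz

theorem exists_forall_apply_mem_of_im_mem_uIcc (hA : IsHolomorphicOneParamGroup A)
    (hM : ∀ θ : ℝ, ‖A θ‖ ≤ M) {V : Set E} (hV : V ∈ 𝓝 0) :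
    ∃ δ > 0, ∀ y (σ τ ζ : ℂ), A σ y ∈ ball 0 δ → A τ y ∈ ball 0 δ →
      ζ.im ∈ uIcc σ.im τ.im → A ζ y ∈ V := by
  obtain ⟨r, hr, hrV⟩ := Metric.mem_nhds_iff.1 hV
  have hM0 : 0 ≤ M := (norm_nonneg _).trans (hM 0)
  have hM1 : 0 < M + 1 := by linarith
  refine ⟨r / (M + 1), div_pos hr hM1, fun y σ τ ζ hσ hτ hζ => hrV (mem_ball_zero_iff.2 ?_)⟩
  calc ‖A ζ y‖ ≤ M * (r / (M + 1)) := hA.norm_apply_le_of_im_mem_uIcc hM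
        (mem_ball_zero_iff.1 hσ).le (mem_ball_zero_iff.1 hτ).le hζ
    _ < (M + 1) * (r / (M + 1)) := by gcongr; linarith
    _ = r := mul_div_cancel₀ r hM1.ne'

end IsHolomorphicOneParamGroup

/-- A holomorphic action of the additive group `ℂ`, i.e. a holomorphic flow in complex time. A
`ℂ*`-action `φ` is studied through the flow `a ↦ φ (exp (a * I))`, of real period `2π`. -/
structure IsHolomorphicFlow {E : Type*} [NormedAddCommGroup E] [NormedSpace ℂ E]
    (Φ : ℂ → E → E) : Prop where
  differentiable : Differentiable ℂ fun q : ℂ × E => Φ q.1 q.2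
  map_zero (x : E) : Φ 0 x = x
  map_add (a b : ℂ) (x : E) : Φ (a + b) x = Φ a (Φ b x)

/-- The linearized action of a flow `Φ` at `p`: the derivatives of its time-`a` maps at `p`. -/
noncomputable def linearizedFlow {E : Type*} [NormedAddCommGroup E] [NormedSpace ℂ E]
    (Φ : ℂ → E → E) (p : E) (a : ℂ) : E →L[ℂ] E :=
  fderiv ℂ (Φ a) p

/-- The linearizing map of a flow `Φ` of real period `T` fixing `p`: the mean over a period of the
displacements `x ↦ Φ θ x - p`, each transported back by the linearized flow. -/
noncomputable def averagedLinearizer {E : Type*} [NormedAddCommGroup E] [NormedSpace ℂ E]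
    (Φ : ℂ → E → E) (p : E) (T : ℝ) (x : E) : E :=
  ⨍ θ in (0 : ℝ)..T, linearizedFlow Φ p (-θ) (Φ θ x - p)

namespace IsHolomorphicFlow

variable {E : Type*} [NormedAddCommGroup E] [NormedSpace ℂ E] {Φ : ℂ → E → E} {p : E} {T : ℝ}

theorem differentiable_apply (hΦ : IsHolomorphicFlow Φ) (a : ℂ) : Differentiable ℂ (Φ a) :=
  hΦ.differentiable.comp (by fun_prop : Differentiable ℂ fun x : E => (a, x))

theorem differentiable_orbit (hΦ : IsHolomorphicFlow Φ) (x : E) : Differentiable ℂ fun a => Φ a x :=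
  hΦ.differentiable.comp (by fun_prop : Differentiable ℂ fun a : ℂ => (a, x))

theorem map_neg_map (hΦ : IsHolomorphicFlow Φ) (a : ℂ) (x : E) : Φ (-a) (Φ a x) = x := by
  rw [← hΦ.map_add, neg_add_cancel, hΦ.map_zero]

theorem map_map_neg (hΦ : IsHolomorphicFlow Φ) (a : ℂ) (x : E) : Φ a (Φ (-a) x) = x := by
  rw [← hΦ.map_add, add_neg_cancel, hΦ.map_zero]

theorem fderiv_eq (hΦ : IsHolomorphicFlow Φ) (a : ℂ) (x : E) :
    fderiv ℂ (Φ a) x = fderiv ℂ (fun q : ℂ × E => Φ q.1 q.2) (a, x) ∘L .inr ℂ ℂ E :=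
  ((hΦ.differentiable (a, x)).hasFDerivAt.comp x (hasFDerivAt_prodMk_right a x)).fderiv

theorem continuous_fderiv (hΦ : IsHolomorphicFlow Φ) :
    Continuous fun q : ℂ × E => fderiv ℂ (Φ q.1) q.2 := by
  simp_rw [hΦ.fderiv_eq]
  exact (continuous_fderiv_of_differentiable hΦ.differentiable).clm_comp continuous_const

theorem continuous_linearizedFlow (hΦ : IsHolomorphicFlow Φ) (p : E) :
    Continuous (linearizedFlow Φ p) :=
  hΦ.continuous_fderiv.comp (.prodMk_left p)

theorem isHolomorphicOneParamGroup_linearizedFlow [CompleteSpace E] (hΦ : IsHolomorphicFlow Φ)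
    (hp : ∀ a, Φ a p = p) : IsHolomorphicOneParamGroup (linearizedFlow Φ p) where
  differentiable_apply y := by
    simp only [linearizedFlow, hΦ.fderiv_eq]
    exact (differentiable_fderiv_apply hΦ.differentiable (0, y)).comp
      (by fun_prop : Differentiable ℂ fun a : ℂ => (a, p))
  map_zero := by
    rw [linearizedFlow, show Φ 0 = id from funext hΦ.map_zero, fderiv_id]
  map_add a b := by
    rw [linearizedFlow, show Φ (a + b) = Φ a ∘ Φ b from funext (hΦ.map_add a b),
      fderiv_comp p (hΦ.differentiable_apply a _) (hΦ.differentiable_apply b p), hp b]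
    rfl

theorem periodic_linearizedFlow (hT : Function.Periodic Φ T) (p : E) :
    Function.Periodic (linearizedFlow Φ p) T :=
  hT.comp fun f => fderiv ℂ f p

theorem exists_norm_linearizedFlow_ofReal_le (hΦ : IsHolomorphicFlow Φ)
    (hT : Function.Periodic Φ T) (hT0 : T ≠ 0) (p : E) :
    ∃ M, ∀ θ : ℝ, ‖linearizedFlow Φ p θ‖ ≤ M := by
  have hper : Function.Periodic (fun θ : ℝ => linearizedFlow Φ p θ) T := fun θ => by
    simpa using periodic_linearizedFlow hT p θ
  obtain ⟨M, hM⟩ := (hper.isBounded_of_continuous hT0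
    ((hΦ.continuous_linearizedFlow p).comp continuous_ofReal)).exists_norm_le
  exact ⟨M, fun θ => hM _ (mem_range_self θ)⟩

theorem hasFDerivAt_averagedLinearizer (hΦ : IsHolomorphicFlow Φ) (p : E) (T : ℝ) (x : E) :
    HasFDerivAt (averagedLinearizer Φ p T)
      (⨍ θ in (0 : ℝ)..T, linearizedFlow Φ p (-θ) ∘L fderiv ℂ (Φ θ) x) x := by
  have hΦc := hΦ.differentiable.continuous
  have hA := hΦ.continuous_linearizedFlow p
  have hdΦ := hΦ.continuous_fderiv
  have hcont (x : E) : Continuous fun θ : ℝ => linearizedFlow Φ p (-θ) (Φ θ x - p) :=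
    (hA.comp (by fun_prop)).clm_apply
      ((hΦc.comp (by fun_prop : Continuous fun θ : ℝ => ((θ : ℂ), x))).sub continuous_const)
  have hcont' : Continuous fun q : E × ℝ =>
      linearizedFlow Φ p (-q.2) ∘L fderiv ℂ (Φ q.2) q.1 :=
    (hA.comp (by fun_prop)).clm_comp
      (hdΦ.comp (by fun_prop : Continuous fun q : E × ℝ => ((q.2 : ℂ), q.1)))
  have heq : averagedLinearizer Φ p T = fun x =>
      (T - 0)⁻¹ • ∫ θ in (0 : ℝ)..T, linearizedFlow Φ p (-θ) (Φ θ x - p) :=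
    funext fun x => interval_average_eq _ _ _
  have hint := hasFDerivAt_intervalIntegral_of_continuous hcont hcont'
    (fun x θ => (linearizedFlow Φ p (-θ)).hasFDerivAt.comp x
      ((hΦ.differentiable_apply θ x).hasFDerivAt.sub_const p)) 0 T x
  rw [heq, interval_average_eq]
  exact hint.fun_const_smul (T - 0)⁻¹

theorem averagedLinearizer_fixedPoint (hp : ∀ a, Φ a p = p) (T : ℝ) :
    averagedLinearizer Φ p T p = 0 := by
  simp [averagedLinearizer, hp]

theorem hasFDerivAt_averagedLinearizer_fixedPoint [CompleteSpace E] (hΦ : IsHolomorphicFlow Φ)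
    (hp : ∀ a, Φ a p = p) (hT0 : T ≠ 0) :
    HasFDerivAt (averagedLinearizer Φ p T) (.id ℂ E) p := by
  have hA := hΦ.isHolomorphicOneParamGroup_linearizedFlow hp
  have hid (θ : ℝ) : linearizedFlow Φ p (-θ) ∘L fderiv ℂ (Φ θ) p = .id ℂ E :=
    ContinuousLinearMap.ext fun y => hA.map_neg_map θ y
  simpa [hid, interval_average_eq, hT0] using hΦ.hasFDerivAt_averagedLinearizer p T p

-- Substituting `θ - s` for `θ` does not change the mean over a period.
theorem averagedLinearizer_map_ofReal [CompleteSpace E] (hΦ : IsHolomorphicFlow Φ)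
    (hp : ∀ a, Φ a p = p) (hT : Function.Periodic Φ T) (s : ℝ) (x : E) :
    averagedLinearizer Φ p T (Φ s x) = linearizedFlow Φ p s (averagedLinearizer Φ p T x) := by
  have hA := hΦ.isHolomorphicOneParamGroup_linearizedFlow hp
  set g : ℝ → E := fun θ => linearizedFlow Φ p (-θ) (Φ θ x - p) with hg
  have hgc : Continuous g :=
    ((hΦ.continuous_linearizedFlow p).comp (by fun_prop)).clm_apply
      (((hΦ.differentiable_orbit x).continuous.comp continuous_ofReal).sub continuous_const)
  have hgper : Function.Periodic g T := fun θ => by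
    simp only [hg, ofReal_add, neg_add, ← sub_eq_add_neg, hT _,
      (periodic_linearizedFlow hT p).sub_eq]
  have hshift (θ : ℝ) :
      linearizedFlow Φ p (-θ) (Φ θ (Φ s x) - p) = linearizedFlow Φ p s (g (θ + s)) := by
    rw [hg, ← ContinuousLinearMap.comp_apply, ← hA.map_add, ← hΦ.map_add]
    push_cast
    congr 2
    ring
  have hmean : ∫ θ in (0 : ℝ)..T, g (θ + s) = ∫ θ in (0 : ℝ)..T, g θ := by
    rw [intervalIntegral.integral_comp_add_right, zero_add, add_comm T,
      hgper.intervalIntegral_add_eq s 0, zero_add]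
  have hint : IntervalIntegrable (fun θ => g (θ + s)) volume 0 T :=
    (hgc.comp (continuous_add_const s)).intervalIntegrable 0 T
  simp only [averagedLinearizer, interval_average_eq, hshift]
  rw [(linearizedFlow Φ p s).intervalIntegral_comp_comm hint, hmean,
    ContinuousLinearMap.map_smul_of_tower]

theorem semiconj_averagedLinearizer [CompleteSpace E] (hΦ : IsHolomorphicFlow Φ)
    (hp : ∀ a, Φ a p = p) (hT : Function.Periodic Φ T) (a : ℂ) :
    Function.Semiconj (averagedLinearizer Φ p T) (Φ a) (linearizedFlow Φ p a) := fun x =>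
  have hF : Differentiable ℂ (averagedLinearizer Φ p T) := fun x =>
    (hΦ.hasFDerivAt_averagedLinearizer p T x).differentiableAt
  congrFun (eq_of_forall_ofReal_eq (hF.comp (hΦ.differentiable_orbit x))
    ((hΦ.isHolomorphicOneParamGroup_linearizedFlow hp).differentiable_apply _)
    fun s => hΦ.averagedLinearizer_map_ofReal hp hT s x) a

end IsHolomorphicFlow

theorem eqOn_symm_comp_of_mapsTo_target {E G : Type*}
    [NormedAddCommGroup E] [NormedSpace ℂ E] [CompleteSpace E]
    [NormedAddCommGroup G] [NormedSpace ℂ G] {e : OpenPartialHomeomorph E G}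
    (he : DifferentiableOn ℂ e.symm e.target) {γ : ℂ → E} (hγ : Differentiable ℂ γ)
    (heγ : Differentiable ℂ (e ∘ γ)) {S : Set ℂ} (hS : IsPreconnected S)
    (hmaps : MapsTo (e ∘ γ) S e.target) {z₀ : ℂ} (hz₀ : z₀ ∈ S) (hγz₀ : γ z₀ ∈ e.source) :
    EqOn (e.symm ∘ e ∘ γ) γ S := by
  have hopen : IsOpen ((e ∘ γ) ⁻¹' e.target) := e.open_target.preimage heγ.continuous
  have han : AnalyticOnNhd ℂ (e.symm ∘ e ∘ γ) S :=
    ((he.comp heγ.differentiableOn (mapsTo_preimage _ _)).analyticOnNhd hopen).mono hmaps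
  refine han.eqOn_of_preconnected_of_eventuallyEq (fun z _ => hγ.analyticAt z) hS hz₀ ?_
  filter_upwards [hγ.continuous.continuousAt.eventually_mem (e.open_source.mem_nhds hγz₀)]
    with z hz using e.left_inv hz

theorem exists_openPartialHomeomorph_differentiableOn_symm {E G : Type*}
    [NormedAddCommGroup E] [NormedSpace ℂ E] [CompleteSpace E]
    [NormedAddCommGroup G] [NormedSpace ℂ G] {F : E → G} {F' : E ≃L[ℂ] G} {p : E}
    (hF : Differentiable ℂ F) (hF' : HasFDerivAt F (F' : E →L[ℂ] G) p) :
    ∃ e : OpenPartialHomeomorph E G,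
      ⇑e = F ∧ p ∈ e.source ∧ DifferentiableOn ℂ e.symm e.target := by
  have hC1 : ContDiffAt ℂ 1 F p :=
    (contDiff_one_iff_fderiv.2 ⟨hF, continuous_fderiv_of_differentiable hF⟩).contDiffAt
  have hsymm := hC1.to_localInverse hF' one_ne_zero
  let e := hC1.toOpenPartialHomeomorph F hF' one_ne_zero
  refine ⟨e.restrContDiff ℂ 1 (by simp), rfl,
    ⟨hC1.mem_toOpenPartialHomeomorph_source hF' one_ne_zero, hC1, hsymm⟩, ?_⟩
  exact (e.contDiffOn_restrContDiff_target ℂ (by simp)).differentiableOn one_ne_zero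

theorem isOpen_image_and_exists_differentiableOn_inverse {𝕜 E G : Type*}
    [NontriviallyNormedField 𝕜] [NormedAddCommGroup E] [NormedSpace 𝕜 E]
    [NormedAddCommGroup G] [NormedSpace 𝕜 G] {F : E → G} {W : Set E} (hinj : InjOn F W)
    (hloc : ∀ x ∈ W, ∃ S : G → E, DifferentiableAt 𝕜 S (F x) ∧
      ∀ᶠ y in 𝓝 (F x), S y ∈ W ∧ F (S y) = y) :
    IsOpen (F '' W) ∧ ∃ F' : G → E, DifferentiableOn 𝕜 F' (F '' W) ∧
      (∀ x ∈ W, F' (F x) = x) ∧ ∀ y ∈ F '' W, F (F' y) = y := by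
  refine ⟨isOpen_iff_mem_nhds.2 ?_, Function.invFunOn F W, ?_,
    fun x hx => hinj.leftInvOn_invFunOn hx, fun y hy => Function.invFunOn_eq hy⟩
  · rintro _ ⟨x, hx, rfl⟩
    obtain ⟨S, -, hS⟩ := hloc x hx
    filter_upwards [hS] with y hy using ⟨S y, hy⟩
  · rintro _ ⟨x, hx, rfl⟩
    obtain ⟨S, hSd, hS⟩ := hloc x hx
    have heq : Function.invFunOn F W =ᶠ[𝓝 (F x)] S := by
      filter_upwards [hS] with y hy
      rw [← hinj.leftInvOn_invFunOn hy.1, hy.2]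
    exact (hSd.congr_of_eventuallyEq heq).differentiableWithinAt

/-- The saturation of `N` under a family `Φ` of self-maps: the points that some `Φ a` moves
into `N`. -/
def flowSaturation {ι X : Type*} (Φ : ι → X → X) (N : Set X) : Set X :=
  ⋃ a, Φ a ⁻¹' N

namespace IsHolomorphicFlow

variable {E : Type*} [NormedAddCommGroup E] [NormedSpace ℂ E] {Φ : ℂ → E → E}

theorem isOpen_flowSaturation (hΦ : IsHolomorphicFlow Φ) {N : Set E} (hN : IsOpen N) :
    IsOpen (flowSaturation Φ N) :=
  isOpen_iUnion fun a => hN.preimage (hΦ.differentiable_apply a).continuous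

theorem subset_flowSaturation (hΦ : IsHolomorphicFlow Φ) (N : Set E) :
    N ⊆ flowSaturation Φ N := fun x hx =>
  mem_iUnion.2 ⟨0, by rwa [mem_preimage, hΦ.map_zero]⟩

theorem mapsTo_flowSaturation (hΦ : IsHolomorphicFlow Φ) (N : Set E) (a : ℂ) :
    MapsTo (Φ a) (flowSaturation Φ N) (flowSaturation Φ N) := fun x hx => by
  obtain ⟨b, hb⟩ := mem_iUnion.1 hx
  refine mem_iUnion.2 ⟨b - a, ?_⟩
  rwa [mem_preimage, ← hΦ.map_add, sub_add_cancel]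

theorem image_flowSaturation (hΦ : IsHolomorphicFlow Φ) (N : Set E) (a : ℂ) :
    Φ a '' flowSaturation Φ N = flowSaturation Φ N :=
  (hΦ.mapsTo_flowSaturation N a).image_subset.antisymm fun x hx =>
    ⟨Φ (-a) x, hΦ.mapsTo_flowSaturation N (-a) hx, hΦ.map_map_neg a x⟩

variable {G : Type*} [NormedAddCommGroup G] [NormedSpace ℂ G] {e : OpenPartialHomeomorph E G}

theorem injOn_flowSaturation [CompleteSpace E] (hΦ : IsHolomorphicFlow Φ) (he : Differentiable ℂ e)
    (hesymm : DifferentiableOn ℂ e.symm e.target) {A : ℂ → G → G}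
    (hsemi : ∀ a, Function.Semiconj e (Φ a) (A a)) {B : Set G}
    (hB : ∀ y (a b ζ : ℂ), A a y ∈ B → A b y ∈ B → ζ.im ∈ uIcc a.im b.im → A ζ y ∈ e.target) :
    InjOn e (flowSaturation Φ (e.source ∩ e ⁻¹' B)) := by
  intro x₁ hx₁ x₂ hx₂ h
  obtain ⟨a, ha, haB⟩ := mem_iUnion.1 hx₁
  obtain ⟨b, hb, hbB⟩ := mem_iUnion.1 hx₂
  rw [mem_preimage, hsemi a x₁] at haB
  rw [mem_preimage, hsemi b x₂, ← h] at hbB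
  have hstrip : IsPreconnected {ζ : ℂ | ζ.im ∈ uIcc a.im b.im} :=
    ((convex_uIcc a.im b.im).is_linear_preimage imCLM.toLinearMap.isLinear).isPreconnected
  have hcont := eqOn_symm_comp_of_mapsTo_target hesymm (hΦ.differentiable_orbit x₁)
    (he.comp (hΦ.differentiable_orbit x₁)) hstrip
    (fun ζ hζ => by simpa only [Function.comp_apply, (hsemi ζ).eq] using hB _ a b ζ haB hbB hζ)
    (z₀ := a) left_mem_uIcc ha
  have hΦb : Φ b x₁ = Φ b x₂ :=
    calc Φ b x₁ = e.symm (e (Φ b x₁)) := (hcont (x := b) right_mem_uIcc).symm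
      _ = e.symm (e (Φ b x₂)) := by rw [hsemi b x₁, hsemi b x₂, h]
      _ = Φ b x₂ := e.left_inv hb
  rw [← hΦ.map_neg_map b x₁, hΦb, hΦ.map_neg_map]

theorem exists_local_section_flowSaturation (hΦ : IsHolomorphicFlow Φ)
    (hesymm : DifferentiableOn ℂ e.symm e.target) {A : ℂ → G →L[ℂ] G}
    (hA : IsHolomorphicOneParamGroup A) (hsemi : ∀ a, Function.Semiconj e (Φ a) (A a))
    {B : Set G} (hBo : IsOpen B) {x : E} (hx : x ∈ flowSaturation Φ (e.source ∩ e ⁻¹' B)) :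
    ∃ S : G → E, DifferentiableAt ℂ S (e x) ∧
      ∀ᶠ y in 𝓝 (e x), S y ∈ flowSaturation Φ (e.source ∩ e ⁻¹' B) ∧ e (S y) = y := by
  obtain ⟨a, ha, haB⟩ := mem_iUnion.1 hx
  have hax : A a (e x) ∈ e.target ∩ B := by
    rw [← hsemi a x]
    exact ⟨e.map_source ha, haB⟩
  refine ⟨fun y => Φ (-a) (e.symm (A a y)), ?_, ?_⟩
  · exact (hΦ.differentiable_apply (-a) _).comp _
      ((hesymm.differentiableAt (e.open_target.mem_nhds hax.1)).comp _ (A a).differentiableAt)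
  · filter_upwards [(A a).continuous.continuousAt.eventually_mem
      ((e.open_target.inter hBo).mem_nhds hax)] with y hy
    refine ⟨mem_iUnion.2 ⟨a, ?_⟩, ?_⟩
    · rw [mem_preimage, hΦ.map_map_neg]
      exact ⟨e.map_target hy.1, by rw [mem_preimage, e.right_inv hy.1]; exact hy.2⟩
    · rw [hsemi (-a), e.right_inv hy.1, hA.map_neg_map]

theorem exists_linearization [CompleteSpace E] {p : E} {T : ℝ} (hΦ : IsHolomorphicFlow Φ)
    (hp : ∀ a, Φ a p = p) (hT : Function.Periodic Φ T) (hT0 : T ≠ 0) :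
    ∃ F : E → E, Differentiable ℂ F ∧ F p = 0 ∧
      (∀ a x, fderiv ℂ (Φ a) p (F x) = F (Φ a x)) ∧
      ∃ W : Set E, IsOpen W ∧ p ∈ W ∧ (∀ a, Φ a '' W = W) ∧ InjOn F W ∧ IsOpen (F '' W) ∧
        ∃ F' : E → E, DifferentiableOn ℂ F' (F '' W) ∧
          (∀ x ∈ W, F' (F x) = x) ∧ ∀ y ∈ F '' W, F (F' y) = y := by
  have hA := hΦ.isHolomorphicOneParamGroup_linearizedFlow hp
  have hsemi := hΦ.semiconj_averagedLinearizer hp hT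
  have hFp := averagedLinearizer_fixedPoint hp T
  have hF : Differentiable ℂ (averagedLinearizer Φ p T) := fun x =>
    (hΦ.hasFDerivAt_averagedLinearizer p T x).differentiableAt
  obtain ⟨e, heF, hpe, hesymm⟩ := exists_openPartialHomeomorph_differentiableOn_symm
    (F' := .refl ℂ E) hF (hΦ.hasFDerivAt_averagedLinearizer_fixedPoint hp hT0)
  rw [← heF] at hsemi hFp hF
  obtain ⟨M, hM⟩ := hΦ.exists_norm_linearizedFlow_ofReal_le hT hT0 p
  obtain ⟨δ, hδ, hstrip⟩ := hA.exists_forall_apply_mem_of_im_mem_uIcc hM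
    (e.open_target.mem_nhds (hFp ▸ e.map_source hpe))
  have hN : IsOpen (e.source ∩ e ⁻¹' ball 0 δ) :=
    e.open_source.inter (isOpen_ball.preimage hF.continuous)
  have hpN : p ∈ e.source ∩ e ⁻¹' ball 0 δ := ⟨hpe, by simpa [hFp] using hδ⟩
  have hinj := hΦ.injOn_flowSaturation hF hesymm hsemi hstrip
  exact ⟨e, hF, hFp, fun a x => (hsemi a x).symm, flowSaturation Φ (e.source ∩ e ⁻¹' ball 0 δ),
    hΦ.isOpen_flowSaturation hN, hΦ.subset_flowSaturation _ hpN, hΦ.image_flowSaturation _, hinj,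
    isOpen_image_and_exists_differentiableOn_inverse hinj fun x =>
      hΦ.exists_local_section_flowSaturation hesymm hA hsemi isOpen_ball⟩

end IsHolomorphicFlow

section CstarAction

variable {E : Type*} [NormedAddCommGroup E] [NormedSpace ℂ E] {φ : ℂ → E → E}

theorem isHolomorphicFlow_exp_mul_I
    (hφ_hol : DifferentiableOn ℂ (fun q : ℂ × E => φ q.1 q.2) ({z : ℂ | z ≠ 0} ×ˢ univ))
    (hφ_one : φ 1 = id) (hφ_mul : ∀ z w : ℂ, z ≠ 0 → w ≠ 0 → φ (z * w) = φ z ∘ φ w) :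
    IsHolomorphicFlow fun a => φ (exp (a * I)) where
  differentiable := differentiableOn_univ.1 <|
    hφ_hol.comp (g := fun q : ℂ × E => φ q.1 q.2) (f := fun q : ℂ × E => (exp (q.1 * I), q.2))
      (by fun_prop : Differentiable ℂ fun q : ℂ × E => (exp (q.1 * I), q.2)).differentiableOn
      fun q _ => ⟨exp_ne_zero _, mem_univ _⟩
  map_zero x := by rw [zero_mul, exp_zero, hφ_one, id]
  map_add a b x := by
    rw [add_mul, exp_add, hφ_mul _ _ (exp_ne_zero _) (exp_ne_zero _), Function.comp_apply]

theorem periodic_exp_mul_I {X : Type*} (φ : ℂ → X) :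
    Function.Periodic (fun a => φ (exp (a * I))) ((2 * Real.pi : ℝ) : ℂ) := fun a => by
  simp only [add_mul, ofReal_mul, ofReal_ofNat, exp_periodic _]

theorem exists_exp_mul_I_eq {z : ℂ} (hz : z ≠ 0) : ∃ a, exp (a * I) = z :=
  ⟨log z / I, by rw [div_mul_cancel₀ _ I_ne_zero, exp_log hz]⟩

end CstarAction

theorem semilocal_linearization_affine_general {E : Type*}
    [NormedAddCommGroup E] [NormedSpace ℂ E] [CompleteSpace E] (φ : ℂ → E → E) (p : E)
    (hφ_hol : DifferentiableOn ℂ (fun q : ℂ × E => φ q.1 q.2) ({z : ℂ | z ≠ 0} ×ˢ univ))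
    (hφ_one : φ 1 = id) (hφ_mul : ∀ z w : ℂ, z ≠ 0 → w ≠ 0 → φ (z * w) = φ z ∘ φ w)
    (hp : ∀ z : ℂ, z ≠ 0 → φ z p = p) :
    ∃ F : E → E, Differentiable ℂ F ∧ F p = 0 ∧
      (∀ z : ℂ, z ≠ 0 → ∀ x, fderiv ℂ (φ z) p (F x) = F (φ z x)) ∧
      ∃ W : Set E, IsOpen W ∧ p ∈ W ∧ (∀ z : ℂ, z ≠ 0 → φ z '' W = W) ∧
        InjOn F W ∧ IsOpen (F '' W) ∧
        ∃ F' : E → E, DifferentiableOn ℂ F' (F '' W) ∧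
          (∀ x ∈ W, F' (F x) = x) ∧ ∀ y ∈ F '' W, F (F' y) = y := by
  have hflow := isHolomorphicFlow_exp_mul_I hφ_hol hφ_one hφ_mul
  obtain ⟨F, hF, hFp, hequiv, W, hWo, hpW, hW, hinv⟩ := hflow.exists_linearization
    (fun a => hp _ (exp_ne_zero _)) (periodic_exp_mul_I φ) Real.two_pi_pos.ne'
  refine ⟨F, hF, hFp, fun z hz x => ?_, W, hWo, hpW, fun z hz => ?_, hinv⟩
  · obtain ⟨a, rfl⟩ := exists_exp_mul_I_eq hz
    exact hequiv a x
  · obtain ⟨a, rfl⟩ := exists_exp_mul_I_eq hz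
    exact hW a

/-- **Theorem A (semi-local linearization in the affine space).**
Let `φ` be a holomorphic `ℂ*`-action on `ℂⁿ` having `p` as a fixed point, and let
`ψᶻ = D(φᶻ)(p)` be the linearized action of `φ` at `p`. Then there is an entire
holomorphic map `F : ℂⁿ → ℂⁿ` with `F p = 0` such that `ψᶻ ∘ F = F ∘ φᶻ` for every
`z ∈ ℂ*`; moreover there is a `φ`-invariant open set `W ∋ p` such that `F` restricted
to `W` is a biholomorphism onto the open set `F '' W`. -/
theorem semilocal_linearization_affine
    {n : ℕ} (φ : ℂ → EuclideanSpace ℂ (Fin n) → EuclideanSpace ℂ (Fin n))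
    (p : EuclideanSpace ℂ (Fin n))
    (hφ_hol : DifferentiableOn ℂ
      (fun q : ℂ × EuclideanSpace ℂ (Fin n) => φ q.1 q.2)
      ({z : ℂ | z ≠ 0} ×ˢ (Set.univ : Set (EuclideanSpace ℂ (Fin n)))))
    (hφ_one : φ 1 = id)
    (hφ_mul : ∀ z w : ℂ, z ≠ 0 → w ≠ 0 → φ (z * w) = φ z ∘ φ w)
    (hp : ∀ z : ℂ, z ≠ 0 → φ z p = p) :
    ∃ F : EuclideanSpace ℂ (Fin n) → EuclideanSpace ℂ (Fin n),
      Differentiable ℂ F ∧ F p = 0 ∧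
      (∀ z : ℂ, z ≠ 0 → ∀ x, fderiv ℂ (φ z) p (F x) = F (φ z x)) ∧
      ∃ W : Set (EuclideanSpace ℂ (Fin n)),
        IsOpen W ∧ p ∈ W ∧ (∀ z : ℂ, z ≠ 0 → φ z '' W = W) ∧
        Set.InjOn F W ∧ IsOpen (F '' W) ∧
        ∃ F' : EuclideanSpace ℂ (Fin n) → EuclideanSpace ℂ (Fin n),
          DifferentiableOn ℂ F' (F '' W) ∧
          (∀ x ∈ W, F' (F x) = x) ∧ (∀ y ∈ F '' W, F (F' y) = y) := by
  exact semilocal_linearization_affine_general φ p hφ_hol hφ_one hφ_mul hp
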